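/- arXiv:1804.09449 — 2 statements merged into one kernel-verified Lean document; each statement's English description precedes it below -/
import Mathlib

section
/- Let G be a finite simple graph that is 4-edge-connected, and let e and f be two edges of G. Then the graph obtained from G by deleting the edges e and f contains two edge-disjoint spanning trees; that is, there exist two spanning subgraphs T_1 and T_2 of G - e - f with disjoint edge sets, each of which is connected and acyclic and contains every vertex of G. -/
open SimpleGraph

/-- A proper edge-coloring: distinct edges of `G` sharing an endpoint get different colors. -/
def IsProperEdgeColoring {V C : Type*} (G : SimpleGraph V) (c : Sym2 V → C) : Prop :=
  ∀ e ∈ G.edgeSet, ∀ f ∈ G.edgeSet, e ≠ f → (∃ v : V, v ∈ e ∧ v ∈ f) → c e ≠ c f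

/-- `S_c(v)`: the set of colors appearing on edges incident to `v`. -/
def colorSet {V C : Type*} (G : SimpleGraph V) (c : Sym2 V → C) (v : V) : Set C :=
  c '' G.incidenceSet v

/-- The edge `uv` is poor: exactly 3 colors appear around its endpoints. -/
def IsPoorAt {V C : Type*} (G : SimpleGraph V) (c : Sym2 V → C) (u v : V) : Prop :=
  (colorSet G c u ∪ colorSet G c v).ncard = 3

/-- The edge `uv` is rich: exactly 5 colors appear around its endpoints. -/
def IsRichAt {V C : Type*} (G : SimpleGraph V) (c : Sym2 V → C) (u v : V) : Prop :=
  (colorSet G c u ∪ colorSet G c v).ncard = 5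

/-- A normal edge-coloring: a proper edge-coloring in which every edge is poor or rich. -/
def IsNormalEdgeColoring {V C : Type*} (G : SimpleGraph V) (c : Sym2 V → C) : Prop :=
  IsProperEdgeColoring G c ∧
    ∀ u v : V, G.Adj u v → IsPoorAt G c u v ∨ IsRichAt G c u v

/-- A nowhere-zero flow with values in an additive group `M` (all elements self-inverse in our
applications): nonzero on every edge, and at every vertex the values on incident edges sum to 0. -/
def IsNowhereZeroFlow {V M : Type*} [AddCommMonoid M] (G : SimpleGraph V)
    (θ : Sym2 V → M) : Prop :=
  (∀ e ∈ G.edgeSet, θ e ≠ 0) ∧ ∀ v : V, ∑ᶠ e ∈ G.incidenceSet v, θ e = 0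

/-- `G` is `k`-edge-connected: connected, and still connected after deleting any set of
fewer than `k` edges. -/
def EdgeConnGe {V : Type*} (G : SimpleGraph V) (k : ℕ) : Prop :=
  G.Connected ∧ ∀ s : Set (Sym2 V), s.ncard < k → (G.deleteEdges s).Connected

/-- `G` is cubic: every vertex has degree 3. -/
def IsCubic {V : Type*} (G : SimpleGraph V) : Prop :=
  ∀ v : V, (G.neighborSet v).ncard = 3

/-- `G` is bridgeless: no edge is a bridge. -/
def Bridgeless {V : Type*} (G : SimpleGraph V) : Prop :=
  ∀ e ∈ G.edgeSet, ¬ G.IsBridge e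

/-!
Colour as many elements of a finite ground set as possible so that the `i`-th colour class is
independent in a given matroid `M i`, and let `D` be the set of elements that can be made uncoloured
by exchanges. By optimality every colour class spans `D` from inside `D`, while all of `Dᶜ` is
coloured; this is the min-max formula for matroid union. For copies of the cycle matroid of a graph
it gives the Nash-Williams–Tutte theorem: there are `k` edge-disjoint spanning trees as soon as
deleting any set of `n` edges leaves at most `n / k + 1` components.

In a `2k`-edge-connected graph, every component left by a disconnecting edge set `s` is bounded by
an edge cut of at least `2k` edges of `s`, and each edge lies in at most two of these cuts, so there
are at most `|s| / k` components. Hence the condition survives the deletion of `k` edges.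
-/

section MatroidUnion

variable {α ι : Type*} {M : ι → Matroid α} {c d : α → Option ι} {i j : ι} {e g : α}

/-- A partial colouring (`none` means uncoloured) whose `i`-th colour class is independent in `M i`,
encoding a family of pairwise disjoint independent sets. -/
def IsIndepColoring (M : ι → Matroid α) (c : α → Option ι) : Prop :=
  ∀ i, (M i).Indep (c ⁻¹' {some i})

/-- An independent colouring leaving as few elements uncoloured as possible. -/
def IsOptimalColoring (M : ι → Matroid α) (c : α → Option ι) : Prop :=
  MinimalFor (IsIndepColoring M) (fun c ↦ (c ⁻¹' {none}).ncard) c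

open Classical in
/-- The colouring in which the uncoloured `e` takes the colour `i` away from `g`. -/
noncomputable def recolor (c : α → Option ι) (i : ι) (e g : α) : α → Option ι :=
  Function.update (Function.update c e (some i)) g none

/-- The moves of the augmenting-path argument: an uncoloured `e` takes the colour of some `g`,
keeping the colour class independent. -/
inductive ColorExchange (M : ι → Matroid α) : (α → Option ι) → (α → Option ι) → Prop
  | recolor {c : α → Option ι} {i : ι} {e g : α} (he : c e = none) (hg : c g = some i)
      (hI : (M i).Indep (insert e (c ⁻¹' {some i}) \ {g})) : ColorExchange M c (recolor c i e g)

/-- The elements that become uncoloured after some sequence of exchanges starting from `c`. -/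
def exchangeClosure (M : ι → Matroid α) (c : α → Option ι) : Set α :=
  {a | ∃ d, Relation.ReflTransGen (ColorExchange M) c d ∧ d a = none}

lemma recolor_preimage_some_self :
    recolor c i e g ⁻¹' {some i} = insert e (c ⁻¹' {some i}) \ {g} := by
  ext a
  simp only [recolor, Function.update_apply, Set.mem_preimage, Set.mem_singleton_iff,
    Set.mem_insert_iff, Set.mem_sdiff]
  grind

lemma recolor_preimage_some_of_ne (hij : j ≠ i) (he : c e = none) (hg : c g = some i) :
    recolor c i e g ⁻¹' {some j} = c ⁻¹' {some j} := by
  ext a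
  simp only [recolor, Function.update_apply, Set.mem_preimage, Set.mem_singleton_iff]
  grind

lemma recolor_preimage_none :
    recolor c i e g ⁻¹' {none} = insert g (c ⁻¹' {none} \ {e}) := by
  ext a
  simp only [recolor, Function.update_apply, Set.mem_preimage, Set.mem_singleton_iff,
    Set.mem_insert_iff, Set.mem_sdiff]
  grind

lemma IsIndepColoring.of_colorExchange (hc : IsIndepColoring M c) (h : ColorExchange M c d) :
    IsIndepColoring M d := by
  cases h with
  | @recolor i e g he hg hI =>
    intro j
    obtain rfl | hij := eq_or_ne j i
    · rwa [recolor_preimage_some_self]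
    · rw [recolor_preimage_some_of_ne hij he hg]
      exact hc j

open Classical in
lemma IsIndepColoring.update (hc : IsIndepColoring M c)
    (hI : (M i).Indep (insert e (c ⁻¹' {some i}))) :
    IsIndepColoring M (Function.update c e (some i)) := by
  intro j
  obtain rfl | hij := eq_or_ne j i
  · refine hI.subset fun a ha ↦ ?_
    simp only [Function.update_apply, Set.mem_preimage, Set.mem_singleton_iff] at ha
    grind
  · refine (hc j).subset fun a ha ↦ ?_
    simp only [Function.update_apply, Set.mem_preimage, Set.mem_singleton_iff] at ha
    grind

section Finite

variable [Finite α]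

lemma ColorExchange.ncard_preimage_none (h : ColorExchange M c d) :
    (d ⁻¹' {none}).ncard = (c ⁻¹' {none}).ncard := by
  obtain ⟨he, hg, -⟩ := h
  rw [recolor_preimage_none, Set.ncard_insert_of_notMem (by simp [hg]),
    Set.ncard_sdiff_singleton_add_one (by simpa using he)]

lemma IsOptimalColoring.of_reflTransGen (hc : IsOptimalColoring M c)
    (h : Relation.ReflTransGen (ColorExchange M) c d) : IsOptimalColoring M d := by
  induction h with
  | refl => exact hc
  | tail _ hstep ih =>
    refine ⟨ih.prop.of_colorExchange hstep, fun b hb hle ↦ ?_⟩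
    simp only [hstep.ncard_preimage_none] at hle ⊢
    exact ih.le_of_le hb hle

lemma IsOptimalColoring.mem_closure (hc : IsOptimalColoring M c) (he : c e = none)
    (heE : e ∈ (M i).E) : e ∈ (M i).closure (c ⁻¹' {some i}) := by
  classical
  by_contra hcl
  have hI := ((hc.prop i).notMem_closure_iff_of_notMem (by simp [he])).1 hcl
  have huncolored :
      Function.update c e (some i) ⁻¹' {none} ⊂ c ⁻¹' {none} := by
    refine ⟨fun a ha ↦ ?_, fun hsub ↦ by simpa using hsub he⟩
    simp only [Function.update_apply, Set.mem_preimage, Set.mem_singleton_iff] at ha ⊢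
    grind
  have hlt := Set.ncard_lt_ncard huncolored
  exact hlt.not_ge (hc.le_of_le (hc.prop.update hI) hlt.le)

-- Every element of the fundamental circuit of `e` other than `e` itself can be exchanged for `e`.
lemma IsOptimalColoring.mem_closure_inter_exchangeClosure (hc : IsOptimalColoring M c)
    (h : Relation.ReflTransGen (ColorExchange M) c d) (he : d e = none) (heE : e ∈ (M i).E) :
    e ∈ (M i).closure (d ⁻¹' {some i} ∩ exchangeClosure M c) := by
  have hd := hc.of_reflTransGen h
  have hcl := hd.mem_closure he heE
  have he' : e ∉ d ⁻¹' {some i} := by simp [he]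
  have hC := (hd.prop i).fundCircuit_isCircuit hcl he'
  refine (M i).closure_subset_closure ?_
    (hC.mem_closure_sdiff_singleton_of_mem ((M i).mem_fundCircuit e _))
  rintro g ⟨hg, hge⟩
  have hgi : d g = some i := ((M i).fundCircuit_subset_insert e _ hg).resolve_left hge
  have hI := ((hd.prop i).mem_fundCircuit_iff hcl he').1 hg
  exact ⟨hgi, _, h.tail (.recolor he hgi hI), by simp [recolor]⟩

lemma IsOptimalColoring.closure_inter_exchangeClosure_subset (hc : IsOptimalColoring M c)
    (h : Relation.ReflTransGen (ColorExchange M) c d) (i : ι) :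
    (M i).closure (d ⁻¹' {some i} ∩ exchangeClosure M c) ⊆
      (M i).closure (c ⁻¹' {some i} ∩ exchangeClosure M c) := by
  induction h with
  | refl => rfl
  | tail hreach hstep ih =>
    refine .trans ?_ ih
    have hc₁ := (hc.of_reflTransGen hreach).prop
    have hc₂ := hc₁.of_colorExchange hstep i
    refine (M i).closure_subset_closure_of_subset_closure fun a ⟨hai, haD⟩ ↦ ?_
    cases hstep with
    | @recolor j e g he hg =>
      obtain rfl | hae := eq_or_ne a e
      · exact hc.mem_closure_inter_exchangeClosure hreach he (hc₂.subset_ground hai)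
      · refine (M i).mem_closure_of_mem ⟨?_, haD⟩
          (Set.inter_subset_left.trans (hc₁ i).subset_ground)
        obtain rfl | hij := eq_or_ne i j
        · rw [recolor_preimage_some_self] at hai
          exact hai.1.resolve_left hae
        · rwa [recolor_preimage_some_of_ne hij he hg] at hai

lemma IsOptimalColoring.isBasis'_inter_exchangeClosure (hc : IsOptimalColoring M c) (i : ι) :
    (M i).IsBasis' (c ⁻¹' {some i} ∩ exchangeClosure M c) (exchangeClosure M c) := by
  have hI := (hc.prop i).inter_right (exchangeClosure M c)
  refine Matroid.isBasis'_iff_isBasis_inter_ground.2 <| hI.isBasis_of_subset_of_subset_closure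
    (Set.subset_inter Set.inter_subset_right hI.subset_ground) ?_
  rintro a ⟨⟨d, hreach, ha⟩, haE⟩
  exact hc.closure_inter_exchangeClosure_subset hreach i
    (hc.mem_closure_inter_exchangeClosure hreach ha haE)

variable (M) in
/-- The matroid union theorem: counting gives `∑ |I i| ≥ ∑ rk_i D + |Dᶜ|`, so the family `I` attains
the upper bound that every `D` imposes on disjoint independent sets. -/
theorem exists_pairwise_disjoint_indep_isBasis'_inter :
    ∃ (I : ι → Set α) (D : Set α), Pairwise (Function.onFun Disjoint I) ∧
      (∀ i, (M i).Indep (I i)) ∧ Dᶜ ⊆ ⋃ i, I i ∧ ∀ i, (M i).IsBasis' (I i ∩ D) D := by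
  obtain ⟨c, hc⟩ : ∃ c, IsOptimalColoring M c :=
    exists_minimalFor_of_wellFoundedLT _ _ ⟨fun _ ↦ none, fun i ↦ by simp⟩
  refine ⟨fun i ↦ c ⁻¹' {some i}, exchangeClosure M c, fun i j hij ↦ ?_, hc.prop, fun a ha ↦ ?_,
    hc.isBasis'_inter_exchangeClosure⟩
  · exact Disjoint.preimage c (by simpa using hij)
  · obtain ⟨i, hi⟩ := Option.ne_none_iff_exists'.1 fun h ↦ ha ⟨c, .refl, h⟩
    exact Set.mem_iUnion.2 ⟨i, hi⟩

end Finite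

end MatroidUnion

section Forests

variable {V : Type*} {G H F : SimpleGraph V}

lemma reachable_le_of_adj_le_reachable (h : G.Adj ≤ H.Reachable) : G.Reachable ≤ H.Reachable := by
  rintro u v ⟨p⟩
  induction p with
  | nil => rfl
  | cons hadj _ ih => exact (h _ _ hadj).trans ih

lemma connected_of_adj_le_reachable (hG : G.Connected) (h : G.Adj ≤ H.Reachable) :
    H.Connected := by
  have := hG.nonempty
  exact ⟨fun u v ↦ reachable_le_of_adj_le_reachable h u v (hG.preconnected u v)⟩

lemma card_connectedComponent_le_of_adj_le_reachable [Finite V] (h : G.Adj ≤ H.Reachable) :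
    Nat.card H.ConnectedComponent ≤ Nat.card G.ConnectedComponent := by
  refine Nat.card_le_card_of_surjective
    (fun C ↦ C.lift H.connectedComponentMk fun u v p _ ↦
      ConnectedComponent.sound (reachable_le_of_adj_le_reachable h u v p.reachable)) fun C ↦ ?_
  obtain ⟨v, rfl⟩ := C.exists_rep
  exact ⟨G.connectedComponentMk v, rfl⟩

-- Joining one vertex of each component to a fixed one makes the graph connected.
lemma card_le_ncard_edgeSet_add_card_connectedComponent [Finite V] [Nonempty V]
    (G : SimpleGraph V) :
    Nat.card V ≤ G.edgeSet.ncard + Nat.card G.ConnectedComponent := by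
  obtain ⟨C₀⟩ : Nonempty G.ConnectedComponent := inferInstance
  let link (C : G.ConnectedComponent) : Sym2 V := s(C₀.out, C.out)
  let G' : SimpleGraph V := G ⊔ fromEdgeSet (link '' {C₀}ᶜ)
  have hlink (C : G.ConnectedComponent) : G'.Reachable C₀.out C.out := by
    obtain rfl | hC := eq_or_ne C₀ C
    · rfl
    · refine Adj.reachable (Or.inr ⟨Set.mem_image_of_mem link hC.symm, fun hout ↦ hC ?_⟩)
      rw [← Quot.out_eq C₀, ← Quot.out_eq C]
      exact congrArg _ hout
  have hconn : G'.Connected := by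
    refine (connected_iff_exists_forall_reachable _).2 ⟨C₀.out, fun v ↦ ?_⟩
    refine (hlink (G.connectedComponentMk v)).trans (Reachable.mono le_sup_left ?_)
    exact ConnectedComponent.exact (Quot.out_eq _)
  have hedges : G'.edgeSet ⊆ G.edgeSet ∪ link '' {C₀}ᶜ := by
    simp only [G', edgeSet_sup, edgeSet_fromEdgeSet]
    grind
  have hcard : ({C₀}ᶜ : Set G.ConnectedComponent).ncard + 1 = Nat.card G.ConnectedComponent := by
    rw [← Set.ncard_add_ncard_compl {C₀}, Set.ncard_singleton, add_comm]
  calc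
    Nat.card V ≤ G'.edgeSet.ncard + 1 := hconn.card_vert_le_card_edgeSet_add_one
    _ ≤ G.edgeSet.ncard + (link '' {C₀}ᶜ).ncard + 1 := by
      grw [Set.ncard_le_ncard hedges, Set.ncard_union_le]
    _ ≤ G.edgeSet.ncard + ({C₀}ᶜ : Set G.ConnectedComponent).ncard + 1 := by
      grw [Set.ncard_image_le]
    _ = G.edgeSet.ncard + Nat.card G.ConnectedComponent := by rw [add_assoc, hcard]

lemma ncard_edgeSet_add_one_of_isTree [Finite V] (hF : F.IsTree) :
    F.edgeSet.ncard + 1 = Nat.card V :=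
  (isTree_iff_connected_and_card.1 hF).2

-- Complete `F` to a spanning tree and replace `F` by `H` there: the result is still connected.
lemma ncard_edgeSet_le_of_isAcyclic_of_adj_le_reachable [Finite V] (hF : F.IsAcyclic)
    (h : F.Adj ≤ H.Reachable) : F.edgeSet.ncard ≤ H.edgeSet.ncard := by
  cases isEmpty_or_nonempty V
  · simp [Set.eq_empty_of_isEmpty]
  obtain ⟨T, hFT, -, hT⟩ := connected_top.exists_isTree_le_of_le_of_isAcyclic le_top hF
  have hconn : (H ⊔ T \ F).Connected := by
    refine connected_of_adj_le_reachable hT.connected fun u v huv ↦ ?_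
    by_cases hFuv : F.Adj u v
    · exact (h u v hFuv).mono le_sup_left
    · exact Adj.reachable (Or.inr ⟨huv, hFuv⟩)
  have hcard : Nat.card V ≤ H.edgeSet.ncard + (T.edgeSet \ F.edgeSet).ncard + 1 := by
    grw [hconn.card_vert_le_card_edgeSet_add_one, Nat.card_coe_set_eq, edgeSet_sup, edgeSet_sdiff,
      Set.ncard_union_le]
  have := ncard_edgeSet_add_one_of_isTree hT
  have := Set.ncard_sdiff_add_ncard_of_subset (edgeSet_mono hFT)
  omega

lemma ncard_edgeSet_add_one_le_of_isAcyclic [Finite V] [Nonempty V] (hF : F.IsAcyclic) :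
    F.edgeSet.ncard + 1 ≤ Nat.card V := by
  obtain ⟨T, hFT, -, hT⟩ := connected_top.exists_isTree_le_of_le_of_isAcyclic le_top hF
  rw [← ncard_edgeSet_add_one_of_isTree hT]
  grw [Set.ncard_le_ncard (edgeSet_mono hFT)]

lemma isTree_of_isAcyclic_of_card_le [Finite V] [Nonempty V] (hF : F.IsAcyclic)
    (h : Nat.card V ≤ F.edgeSet.ncard + 1) : F.IsTree := by
  obtain ⟨T, hFT, -, hT⟩ := connected_top.exists_isTree_le_of_le_of_isAcyclic le_top hF
  have hcard := ncard_edgeSet_add_one_of_isTree hT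
  have hedges := Set.eq_of_subset_of_ncard_le (edgeSet_mono hFT) (by omega)
  rwa [edgeSet_inj.1 hedges]

end Forests

section CycleMatroid

variable {V : Type*} {G : SimpleGraph V} {I J X : Set (Sym2 V)} {u v : V}

lemma edgeSet_fromEdgeSet_of_subset (hI : I ⊆ G.edgeSet) : (fromEdgeSet I).edgeSet = I := by
  rw [edgeSet_fromEdgeSet, sdiff_eq_left, Set.disjoint_left]
  exact fun e he ↦ G.not_isDiag_of_mem_edgeSet (hI he)

lemma isAcyclic_fromEdgeSet_insert_of_not_reachable (hI : (fromEdgeSet I).IsAcyclic)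
    (huv : ¬(fromEdgeSet I).Reachable u v) : (fromEdgeSet (insert s(u, v) I)).IsAcyclic := by
  rw [Set.insert_eq, Set.union_comm, fromEdgeSet_union]
  exact hI.sup_edge_of_not_reachable huv

variable [Finite V]

lemma exists_isAcyclic_fromEdgeSet_insert_of_ncard_lt (hI : (fromEdgeSet I).IsAcyclic)
    (hJ : (fromEdgeSet J).IsAcyclic) (hJG : J ⊆ G.edgeSet) (hcard : I.ncard < J.ncard) :
    ∃ e ∈ J, e ∉ I ∧ (fromEdgeSet (insert e I)).IsAcyclic := by
  by_contra! hmax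
  have hreach : (fromEdgeSet J).Adj ≤ (fromEdgeSet I).Reachable := by
    intro u v huv
    by_contra hnot
    refine hmax s(u, v) huv.1 (fun huvI ↦ hnot (Adj.reachable ⟨huvI, huv.2⟩)) ?_
    exact isAcyclic_fromEdgeSet_insert_of_not_reachable hI hnot
  have hle := ncard_edgeSet_le_of_isAcyclic_of_adj_le_reachable hJ hreach
  rw [edgeSet_fromEdgeSet_of_subset hJG, edgeSet_fromEdgeSet] at hle
  exact hcard.not_ge (hle.trans (Set.ncard_le_ncard Set.sdiff_subset))

/-- The cycle matroid of `G`: its ground set is the edge set of `G`, and its independent sets are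
the edge sets of the forests contained in `G`. -/
def cycleMatroid (G : SimpleGraph V) : Matroid (Sym2 V) :=
  (IndepMatroid.ofFinite G.edgeSet.toFinite
    (fun I ↦ I ⊆ G.edgeSet ∧ (fromEdgeSet I).IsAcyclic)
    (by simp)
    (fun _ _ hJ hIJ ↦ ⟨hIJ.trans hJ.1, hJ.2.anti (fromEdgeSet_mono hIJ)⟩)
    (fun _ _ hI hJ hcard ↦
      have ⟨e, heJ, heI, hins⟩ :=
        exists_isAcyclic_fromEdgeSet_insert_of_ncard_lt hI.2 hJ.2 hJ.1 hcard
      ⟨e, heJ, heI, Set.insert_subset (hJ.1 heJ) hI.1, hins⟩)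
    (fun _ hI ↦ hI.1)).matroid

lemma cycleMatroid_indep_iff :
    (cycleMatroid G).Indep I ↔ I ⊆ G.edgeSet ∧ (fromEdgeSet I).IsAcyclic := Iff.rfl

lemma adj_deleteEdges_compl_le_reachable_of_isBasis' (h : (cycleMatroid G).IsBasis' I X) :
    (G.deleteEdges Xᶜ).Adj ≤ (fromEdgeSet I).Reachable := by
  intro u v huv
  obtain ⟨hG, hX⟩ := deleteEdges_adj.1 huv
  obtain ⟨hIG, hI⟩ := cycleMatroid_indep_iff.1 h.indep
  by_contra hnot
  have hins : (cycleMatroid G).Indep (insert s(u, v) I) :=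
    ⟨Set.insert_subset hG hIG, isAcyclic_fromEdgeSet_insert_of_not_reachable hI hnot⟩
  have huvI : s(u, v) ∈ I := h.mem_of_insert_indep (not_not.1 hX) hins
  exact hnot (Adj.reachable ⟨huvI, hG.ne⟩)

lemma card_le_ncard_add_card_connectedComponent_of_isBasis' [Nonempty V]
    (h : (cycleMatroid G).IsBasis' I X) :
    Nat.card V ≤ I.ncard + Nat.card (G.deleteEdges Xᶜ).ConnectedComponent := by
  grw [card_le_ncard_edgeSet_add_card_connectedComponent (fromEdgeSet I),
    edgeSet_fromEdgeSet_of_subset h.indep.subset_ground,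
    card_connectedComponent_le_of_adj_le_reachable
      (adj_deleteEdges_compl_le_reachable_of_isBasis' h)]

end CycleMatroid

section TreePacking

lemma sum_ncard_inter_add_ncard_compl_le {α ι : Type*} [Finite α] [Fintype ι] {I : ι → Set α}
    {D : Set α} (h : Dᶜ ⊆ ⋃ i, I i) :
    ∑ i, (I i ∩ D).ncard + Dᶜ.ncard ≤ ∑ i, (I i).ncard := by
  have hcompl : Dᶜ ⊆ ⋃ i, I i \ D := by
    rw [← Set.iUnion_sdiff]
    exact fun a ha ↦ ⟨h ha, ha⟩
  calc
    ∑ i, (I i ∩ D).ncard + Dᶜ.ncard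
      ≤ ∑ i, (I i ∩ D).ncard + ∑ i, (I i \ D).ncard := by
        grw [Set.ncard_le_ncard hcompl, Set.ncard_iUnion_le_of_fintype]
    _ = ∑ i, (I i).ncard := by
      rw [← Finset.sum_add_distrib]
      exact Finset.sum_congr rfl fun i _ ↦ Set.ncard_inter_add_ncard_sdiff_eq_ncard _ _

/-- The Nash-Williams–Tutte theorem, with deleted edge sets in place of vertex partitions. -/
theorem exists_pairwise_disjoint_isTree_le {V ι : Type*} [Finite V] [Nonempty V] [Fintype ι]
    {G : SimpleGraph V}
    (h : ∀ s : Set (Sym2 V), Fintype.card ι * Nat.card (G.deleteEdges s).ConnectedComponent ≤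
      s.ncard + Fintype.card ι) :
    ∃ T : ι → SimpleGraph V, (∀ i, T i ≤ G) ∧ (∀ i, (T i).IsTree) ∧
      Pairwise (Function.onFun Disjoint fun i ↦ (T i).edgeSet) := by
  obtain ⟨I, D, hdisj, hindep, hcompl, hbasis⟩ :=
    exists_pairwise_disjoint_indep_isBasis'_inter fun _ : ι ↦ cycleMatroid G
  have hedge (i : ι) : (fromEdgeSet (I i)).edgeSet = I i :=
    edgeSet_fromEdgeSet_of_subset (hindep i).1
  have hle (i : ι) : (I i).ncard + 1 ≤ Nat.card V := by
    simpa only [hedge] using ncard_edgeSet_add_one_le_of_isAcyclic (hindep i).2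
  have hsum : ∑ _i : ι, Nat.card V ≤ ∑ i, ((I i).ncard + 1) := calc
    ∑ _i : ι, Nat.card V
      ≤ ∑ i, ((I i ∩ D).ncard + Nat.card (G.deleteEdges Dᶜ).ConnectedComponent) :=
        Finset.sum_le_sum fun i _ ↦
          card_le_ncard_add_card_connectedComponent_of_isBasis' (hbasis i)
    _ = ∑ i, (I i ∩ D).ncard +
          Fintype.card ι * Nat.card (G.deleteEdges Dᶜ).ConnectedComponent := by
        simp [Finset.sum_add_distrib]
    _ ≤ ∑ i, (I i ∩ D).ncard + Dᶜ.ncard + Fintype.card ι := by grw [h Dᶜ, add_assoc]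
    _ ≤ ∑ i, (I i).ncard + Fintype.card ι := by grw [sum_ncard_inter_add_ncard_compl_le hcompl]
    _ = ∑ i, ((I i).ncard + 1) := by simp [Finset.sum_add_distrib]
  have heq (i : ι) : (I i).ncard + 1 = Nat.card V :=
    (Finset.sum_eq_sum_iff_of_le fun i _ ↦ hle i).1
      ((Finset.sum_le_sum fun i _ ↦ hle i).antisymm hsum) i (Finset.mem_univ i)
  refine ⟨fun i ↦ fromEdgeSet (I i), fun i ↦ ?_, fun i ↦ ?_, fun i j hij ↦ ?_⟩
  · exact edgeSet_subset_edgeSet.1 ((hedge i).subset.trans (hindep i).1)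
  · exact isTree_of_isAcyclic_of_card_le (hindep i).2 (by rw [hedge, heq])
  · simpa only [Function.onFun, hedge] using hdisj hij

end TreePacking

section EdgeConnectivity

variable {V : Type*} {G A : SimpleGraph V} {S : Set V} {s : Set (Sym2 V)} {k m : ℕ}

/-- The edge cut `δ(S)`: the edges of `G` with exactly one end in `S`. -/
def edgeCut (G : SimpleGraph V) (S : Set V) : Set (Sym2 V) :=
  {x ∈ G.edgeSet | ∃ a ∈ S, ∃ b ∉ S, x = s(a, b)}

lemma EdgeConnGe.le_ncard_edgeCut (hG : EdgeConnGe G m) (hS : S.Nonempty) (hSc : Sᶜ.Nonempty) :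
    m ≤ (edgeCut G S).ncard := by
  by_contra! hlt
  obtain ⟨a, ha⟩ := hS
  obtain ⟨b, hb⟩ := hSc
  obtain ⟨p⟩ := (hG.2 _ hlt).preconnected a b
  obtain ⟨d, -, hfst, hsnd⟩ := p.exists_boundary_dart S ha hb
  obtain ⟨hadj, hcut⟩ := deleteEdges_adj.1 d.adj
  exact hcut ⟨hadj, d.fst, hfst, d.snd, hsnd, rfl⟩

lemma edgeCut_supp_subset (C : (G.deleteEdges s).ConnectedComponent) : edgeCut G C.supp ⊆ s := by
  rintro _ ⟨hadj, a, ha, b, hb, rfl⟩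
  by_contra hs
  exact hb (C.mem_supp_of_adj_mem_supp ha (deleteEdges_adj.2 ⟨hadj, hs⟩))

lemma ncard_pair_le {α : Type*} (a b : α) : ({a, b} : Set α).ncard ≤ 2 :=
  (Set.ncard_insert_le a {b}).trans_eq (by rw [Set.ncard_singleton])

lemma ncard_setOf_mem_edgeCut_supp_le (x : Sym2 V) :
    {C : A.ConnectedComponent | x ∈ edgeCut G C.supp}.ncard ≤ 2 := by
  induction x with
  | h u v =>
    refine (Set.ncard_le_ncard (t := {A.connectedComponentMk u, A.connectedComponentMk v})
      ?_).trans (ncard_pair_le _ _)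
    rintro C ⟨-, a, ha, b, -, hab⟩
    obtain ⟨rfl, -⟩ | ⟨-, rfl⟩ := Sym2.eq_iff.1 hab
    · exact .inl ha.symm
    · exact .inr ha.symm

lemma nonempty_compl_supp [Nontrivial A.ConnectedComponent] (C : A.ConnectedComponent) :
    C.suppᶜ.Nonempty := by
  obtain ⟨C', hne⟩ := exists_ne C
  obtain ⟨v, rfl⟩ := C'.exists_rep
  exact ⟨v, hne⟩

variable [Finite V]

-- Count the pairs of a component and an edge of `s` leaving it.
lemma EdgeConnGe.mul_card_connectedComponent_le (hG : EdgeConnGe G m)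
    [Nontrivial (G.deleteEdges s).ConnectedComponent] :
    m * Nat.card (G.deleteEdges s).ConnectedComponent ≤ 2 * s.ncard := by
  classical
  have := Fintype.ofFinite V
  have := Fintype.ofFinite (G.deleteEdges s).ConnectedComponent
  let leaves (C : (G.deleteEdges s).ConnectedComponent) (x : Sym2 V) : Prop :=
    x ∈ edgeCut G C.supp
  have habove (C) : m ≤ (Finset.bipartiteAbove leaves s.toFinset C).card := by
    refine (hG.le_ncard_edgeCut C.nonempty_supp (nonempty_compl_supp C)).trans ?_
    rw [← Set.ncard_coe_finset]
    refine Set.ncard_le_ncard fun x hx ↦ ?_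
    simpa [leaves, hx] using edgeCut_supp_subset C hx
  have hbelow (x) : (Finset.bipartiteBelow leaves Finset.univ x).card ≤ 2 := by
    simpa [← Set.ncard_coe_finset, leaves] using ncard_setOf_mem_edgeCut_supp_le x
  have hcount := Finset.card_mul_le_card_mul leaves (fun C _ ↦ habove C) (fun x _ ↦ hbelow x)
  rwa [Finset.card_univ, ← Nat.card_eq_fintype_card, ← Set.ncard_eq_toFinset_card', mul_comm,
    mul_comm s.ncard] at hcount

theorem stmt_3_general (G : SimpleGraph V) (hG : EdgeConnGe G (2 * k)) (s : Set (Sym2 V))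
    (hs : s.ncard ≤ k) :
    ∃ T : Fin k → SimpleGraph V, (∀ i, T i ≤ G.deleteEdges s) ∧ (∀ i, (T i).IsTree) ∧
      Pairwise (Function.onFun Disjoint fun i ↦ (T i).edgeSet) := by
  have := hG.1.nonempty
  refine exists_pairwise_disjoint_isTree_le fun t ↦ ?_
  rw [Fintype.card_fin, deleteEdges_deleteEdges]
  cases subsingleton_or_nontrivial (G.deleteEdges (s ∪ t)).ConnectedComponent
  · have hcard : Nat.card (G.deleteEdges (s ∪ t)).ConnectedComponent ≤ 1 :=
      Finite.card_le_one_iff_subsingleton.2 inferInstance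
    grw [hcard, mul_one, ← Nat.le_add_left]
  · refine Nat.le_of_mul_le_mul_left ?_ two_pos
    calc
      2 * (k * Nat.card (G.deleteEdges (s ∪ t)).ConnectedComponent) ≤ 2 * (s ∪ t).ncard := by
        grw [← mul_assoc, hG.mul_card_connectedComponent_le]
      _ ≤ 2 * (t.ncard + k) := by grw [Set.ncard_union_le, hs, add_comm]

end EdgeConnectivity

theorem stmt_3 {V : Type*} [Fintype V] (G : SimpleGraph V)
    (hG : EdgeConnGe G 4) (e f : Sym2 V) (he : e ∈ G.edgeSet) (hf : f ∈ G.edgeSet) :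
    ∃ T₁ T₂ : SimpleGraph V,
      T₁ ≤ G.deleteEdges {e, f} ∧ T₂ ≤ G.deleteEdges {e, f} ∧
      T₁.IsTree ∧ T₂.IsTree ∧ Disjoint T₁.edgeSet T₂.edgeSet := by
  obtain ⟨T, hle, htree, hdisj⟩ := stmt_3_general (k := 2) G hG {e, f} (ncard_pair_le e f)
  exact ⟨T 0, T 1, hle 0, hle 1, htree 0, htree 1, hdisj Fin.zero_ne_one⟩
end

section
/- Let G be a finite simple cubic graph containing the graph K as a subgraph, i.e., there exist five pairwise distinct vertices v1, v2, v3, v4, v5 of G such that v1v2, v1v3, v2v4, v2v5, v3v4, v3v5, v4v5 are all edges of G. Then G admits no normal edge-coloring with at most 6 colors; that is, χ'_N(G) ≥ 7. -/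
open SimpleGraph

/-!
Write `S v` for `colorSet G c v`, which has three elements when `c` is normal and `G` is cubic.
Inclusion–exclusion shows that a poor edge `uv` has `S u = S v`, while a rich one has
`S u ∩ S v = {c uv}`; in particular, two common colors already force `S u = S v`.
Consider an edge `xy` on two triangles with apexes `u` and `t`, and let the third edges at the
apexes be `uw` and `tw`.

* If `xy` is poor, then `S u` and `S x = S y` share the colors of `ux` and `uy`, so they coincide,
  which forces `c uw = c xy`. Likewise `c tw = c xy`, so `c` is not proper at `w`.
* If `xy` is rich, then `c uy ∉ S x`, so `ux` is rich too and `c uw ∉ S x`; by symmetry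
  `c uw ∉ S y`. The same holds for `tw`, so `c uw`, `c tw` and the five colors of `S x ∪ S y`
  are seven distinct colors.
-/

section

variable {V C : Type*} {G : SimpleGraph V} {c : Sym2 V → C} {u v w x y : V}

theorem color_mem_colorSet_left (h : G.Adj u v) : c s(u, v) ∈ colorSet G c u :=
  Set.mem_image_of_mem c ((G.mem_incidenceSet u v).2 h)

theorem color_mem_colorSet_right (h : G.Adj u v) : c s(u, v) ∈ colorSet G c v :=
  Sym2.eq_swap (a := v) (b := u) ▸ color_mem_colorSet_left h.symm

theorem colorSet_subset_image_edgeSet (v : V) : colorSet G c v ⊆ c '' G.edgeSet :=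
  Set.image_mono (G.incidenceSet_subset v)

theorem IsRichAt.symm (h : IsRichAt G c u v) : IsRichAt G c v u := by
  rwa [IsRichAt, Set.union_comm]

namespace IsProperEdgeColoring

theorem color_ne_color (hc : IsProperEdgeColoring G c) (hx : G.Adj v x) (hy : G.Adj v y)
    (hxy : x ≠ y) : c s(v, x) ≠ c s(v, y) :=
  hc _ hx _ hy (mt Sym2.congr_right.1 hxy) ⟨v, Sym2.mem_mk_left v x, Sym2.mem_mk_left v y⟩

theorem ncard_colorSet (hc : IsProperEdgeColoring G c) (v : V) :
    (colorSet G c v).ncard = (G.neighborSet v).ncard := by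
  classical
  have injOn_incidenceSet : Set.InjOn c (G.incidenceSet v) := fun e he f hf hef =>
    by_contra fun hne => hc e he.1 f hf.1 hne ⟨v, he.2, hf.2⟩ hef
  exact injOn_incidenceSet.ncard_image.trans (Set.ncard_congr' (G.incidenceSetEquivNeighborSet v))

theorem ncard_colorSet_eq_three (hc : IsProperEdgeColoring G c) (hG : IsCubic G) (v : V) :
    (colorSet G c v).ncard = 3 :=
  (hc.ncard_colorSet v).trans (hG v)

theorem finite_colorSet (hc : IsProperEdgeColoring G c) (hG : IsCubic G) (v : V) :
    (colorSet G c v).Finite :=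
  Set.finite_of_ncard_ne_zero (by simp [hc.ncard_colorSet_eq_three hG])

theorem colorSet_eq_triple (hc : IsProperEdgeColoring G c) (hG : IsCubic G)
    (hx : G.Adj v x) (hy : G.Adj v y) (hw : G.Adj v w) (hxy : x ≠ y) (hxw : x ≠ w)
    (hyw : y ≠ w) : colorSet G c v = {c s(v, x), c s(v, y), c s(v, w)} := by
  have ncard_triple : ({c s(v, x), c s(v, y), c s(v, w)} : Set C).ncard = 3 :=
    Set.ncard_eq_three.2 ⟨_, _, _, hc.color_ne_color hx hy hxy, hc.color_ne_color hx hw hxw,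
      hc.color_ne_color hy hw hyw, rfl⟩
  refine (Set.eq_of_subset_of_ncard_le ?_ ?_ (hc.finite_colorSet hG v)).symm
  · rintro _ (rfl | rfl | rfl)
    exacts [color_mem_colorSet_left hx, color_mem_colorSet_left hy, color_mem_colorSet_left hw]
  · rw [hc.ncard_colorSet_eq_three hG, ncard_triple]

theorem colorSet_eq_of_isPoorAt (hc : IsProperEdgeColoring G c) (hG : IsCubic G)
    (hpoor : IsPoorAt G c u v) : colorSet G c u = colorSet G c v := by
  have finite_union := (hc.finite_colorSet hG u).union (hc.finite_colorSet hG v)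
  have left_eq_union : colorSet G c u = colorSet G c u ∪ colorSet G c v :=
    Set.eq_of_subset_of_ncard_le Set.subset_union_left
      (by rw [hpoor, hc.ncard_colorSet_eq_three hG]) finite_union
  have right_eq_union : colorSet G c v = colorSet G c u ∪ colorSet G c v :=
    Set.eq_of_subset_of_ncard_le Set.subset_union_right
      (by rw [hpoor, hc.ncard_colorSet_eq_three hG]) finite_union
  exact left_eq_union.trans right_eq_union.symm

theorem colorSet_inter_eq_of_isRichAt (hc : IsProperEdgeColoring G c) (hG : IsCubic G)
    (huv : G.Adj u v) (hrich : IsRichAt G c u v) :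
    colorSet G c u ∩ colorSet G c v = {c s(u, v)} := by
  have ncard_inter : (colorSet G c u ∩ colorSet G c v).ncard = 1 := by
    have inclusion_exclusion := Set.ncard_union_add_ncard_inter _ _
      (hc.finite_colorSet hG u) (hc.finite_colorSet hG v)
    rw [hrich, hc.ncard_colorSet_eq_three hG, hc.ncard_colorSet_eq_three hG] at inclusion_exclusion
    omega
  obtain ⟨k, hk⟩ := Set.ncard_eq_one.1 ncard_inter
  have color_mem : c s(u, v) ∈ colorSet G c u ∩ colorSet G c v :=
    ⟨color_mem_colorSet_left huv, color_mem_colorSet_right huv⟩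
  rw [hk] at color_mem ⊢
  rw [Set.mem_singleton_iff.1 color_mem]

end IsProperEdgeColoring

namespace IsNormalEdgeColoring

theorem colorSet_eq_of_mem_of_mem (hc : IsNormalEdgeColoring G c) (hG : IsCubic G)
    (huv : G.Adj u v) {k : C} (hku : k ∈ colorSet G c u) (hkv : k ∈ colorSet G c v)
    (hk : k ≠ c s(u, v)) : colorSet G c u = colorSet G c v := by
  rcases hc.2 u v huv with hpoor | hrich
  · exact hc.1.colorSet_eq_of_isPoorAt hG hpoor
  · have k_mem_inter : k ∈ colorSet G c u ∩ colorSet G c v := ⟨hku, hkv⟩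
    rw [hc.1.colorSet_inter_eq_of_isRichAt hG huv hrich] at k_mem_inter
    exact absurd k_mem_inter hk

theorem color_eq_of_isPoorAt_of_triangle (hc : IsNormalEdgeColoring G c) (hG : IsCubic G)
    (hxy : G.Adj x y) (hpoor : IsPoorAt G c x y) (hux : G.Adj u x) (huy : G.Adj u y)
    (huw : G.Adj u w) (hxw : x ≠ w) (hyw : y ≠ w) : c s(u, w) = c s(x, y) := by
  have colorSet_u_eq : colorSet G c u = colorSet G c x :=
    hc.colorSet_eq_of_mem_of_mem hG hux (color_mem_colorSet_left huy)
      (hc.1.colorSet_eq_of_isPoorAt hG hpoor ▸ color_mem_colorSet_right huy)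
      (hc.1.color_ne_color huy hux hxy.ne')
  have xy_mem : c s(x, y) ∈ colorSet G c u := colorSet_u_eq ▸ color_mem_colorSet_left hxy
  have xy_ne_ux : c s(x, y) ≠ c s(u, x) := by
    simpa only [Sym2.eq_swap (a := u)] using hc.1.color_ne_color hxy hux.symm huy.ne'
  have xy_ne_uy : c s(x, y) ≠ c s(u, y) := by
    simpa only [Sym2.eq_swap (b := y)] using hc.1.color_ne_color hxy.symm huy.symm hux.ne'
  rw [hc.1.colorSet_eq_triple hG hux huy huw hxy.ne hxw hyw] at xy_mem
  exact ((xy_mem.resolve_left xy_ne_ux).resolve_left xy_ne_uy).symm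

theorem color_notMem_colorSet_of_isRichAt_of_triangle (hc : IsNormalEdgeColoring G c)
    (hG : IsCubic G) (hxy : G.Adj x y) (hrich : IsRichAt G c x y) (hux : G.Adj u x)
    (huy : G.Adj u y) (huw : G.Adj u w) (hxw : x ≠ w) : c s(u, w) ∉ colorSet G c x := by
  have uy_notMem : c s(u, y) ∉ colorSet G c x := fun uy_mem => by
    have uy_mem_inter : c s(u, y) ∈ colorSet G c x ∩ colorSet G c y :=
      ⟨uy_mem, color_mem_colorSet_right huy⟩
    rw [hc.1.colorSet_inter_eq_of_isRichAt hG hxy hrich] at uy_mem_inter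
    refine hc.1.color_ne_color huy.symm hxy.symm hux.ne ?_
    simpa only [Sym2.eq_swap (b := y), Set.mem_singleton_iff] using uy_mem_inter
  intro uw_mem
  have colorSet_u_eq : colorSet G c u = colorSet G c x :=
    hc.colorSet_eq_of_mem_of_mem hG hux (color_mem_colorSet_left huw) uw_mem
      (hc.1.color_ne_color huw hux hxw.symm)
  exact uy_notMem (colorSet_u_eq ▸ color_mem_colorSet_left huy)

theorem color_notMem_colorSet_union_of_isRichAt_of_triangle (hc : IsNormalEdgeColoring G c)
    (hG : IsCubic G) (hxy : G.Adj x y) (hrich : IsRichAt G c x y) (hux : G.Adj u x)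
    (huy : G.Adj u y) (huw : G.Adj u w) (hxw : x ≠ w) (hyw : y ≠ w) :
    c s(u, w) ∉ colorSet G c x ∪ colorSet G c y := by
  rintro (hx | hy)
  · exact hc.color_notMem_colorSet_of_isRichAt_of_triangle hG hxy hrich hux huy huw hxw hx
  · exact hc.color_notMem_colorSet_of_isRichAt_of_triangle hG hxy.symm hrich.symm huy hux huw hyw
      hy

end IsNormalEdgeColoring

theorem seven_le_encard_image_edgeSet_of_isRichAt (hrich : IsRichAt G c x y) {a b : C}
    (ha : a ∈ c '' G.edgeSet) (hb : b ∈ c '' G.edgeSet) (hab : a ≠ b)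
    (ha_notMem : a ∉ colorSet G c x ∪ colorSet G c y)
    (hb_notMem : b ∉ colorSet G c x ∪ colorSet G c y) : 7 ≤ (c '' G.edgeSet).encard := by
  have disjoint_pair : Disjoint {a, b} (colorSet G c x ∪ colorSet G c y) := by
    simp only [Set.disjoint_insert_left, Set.disjoint_singleton_left]
    exact ⟨ha_notMem, hb_notMem⟩
  have encard_union : (colorSet G c x ∪ colorSet G c y).encard = 5 := by
    rw [← (Set.finite_of_ncard_ne_zero (by rw [hrich]; norm_num)).cast_ncard_eq, hrich]
    rfl
  calc (7 : ℕ∞) = 2 + 5 := by norm_num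
    _ = ({a, b} ∪ (colorSet G c x ∪ colorSet G c y)).encard := by
      rw [Set.encard_union_eq disjoint_pair, Set.encard_pair hab, encard_union]
    _ ≤ (c '' G.edgeSet).encard := Set.encard_le_encard <|
      Set.union_subset (Set.pair_subset ha hb) <|
        Set.union_subset (colorSet_subset_image_edgeSet x) (colorSet_subset_image_edgeSet y)

end

theorem stmt_6_general {V C : Type*} (G : SimpleGraph V) (hG : IsCubic G)
    (v₁ v₂ v₃ v₄ v₅ : V) (hdist : ([v₁, v₂, v₃, v₄, v₅] : List V).Nodup)
    (h12 : G.Adj v₁ v₂) (h13 : G.Adj v₁ v₃) (h24 : G.Adj v₂ v₄) (h25 : G.Adj v₂ v₅)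
    (h34 : G.Adj v₃ v₄) (h35 : G.Adj v₃ v₅) (h45 : G.Adj v₄ v₅)
    (c : Sym2 V → C) (hc : IsNormalEdgeColoring G c) : 7 ≤ (c '' G.edgeSet).encard := by
  obtain ⟨n23, n41, n51⟩ : v₂ ≠ v₃ ∧ v₄ ≠ v₁ ∧ v₅ ≠ v₁ := by grind
  have color_ne : c s(v₂, v₁) ≠ c s(v₃, v₁) := by
    simpa only [Sym2.eq_swap (b := v₁)] using hc.1.color_ne_color h12 h13 n23
  rcases hc.2 v₄ v₅ h45 with hpoor | hrich
  · have color_v₂v₁ : c s(v₂, v₁) = c s(v₄, v₅) :=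
      hc.color_eq_of_isPoorAt_of_triangle hG h45 hpoor h24 h25 h12.symm n41 n51
    have color_v₃v₁ : c s(v₃, v₁) = c s(v₄, v₅) :=
      hc.color_eq_of_isPoorAt_of_triangle hG h45 hpoor h34 h35 h13.symm n41 n51
    exact absurd (color_v₂v₁.trans color_v₃v₁.symm) color_ne
  · exact seven_le_encard_image_edgeSet_of_isRichAt hrich
      (Set.mem_image_of_mem c h12.symm) (Set.mem_image_of_mem c h13.symm) color_ne
      (hc.color_notMem_colorSet_union_of_isRichAt_of_triangle hG h45 hrich h24 h25 h12.symm n41 n51)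
      (hc.color_notMem_colorSet_union_of_isRichAt_of_triangle hG h45 hrich h34 h35 h13.symm n41 n51)

theorem stmt_6 {V : Type*} [Fintype V] (G : SimpleGraph V) (hG : IsCubic G)
    (v₁ v₂ v₃ v₄ v₅ : V) (hdist : ([v₁, v₂, v₃, v₄, v₅] : List V).Nodup)
    (h12 : G.Adj v₁ v₂) (h13 : G.Adj v₁ v₃) (h24 : G.Adj v₂ v₄) (h25 : G.Adj v₂ v₅)
    (h34 : G.Adj v₃ v₄) (h35 : G.Adj v₃ v₅) (h45 : G.Adj v₄ v₅) :
    ∀ c : Sym2 V → Fin 6, ¬ IsNormalEdgeColoring G c := by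
  intro c hc
  have seven_le_six : 7 ≤ ENat.card (Fin 6) :=
    (stmt_6_general G hG v₁ v₂ v₃ v₄ v₅ hdist h12 h13 h24 h25 h34 h35 h45 c hc).trans
      Set.encard_le_card
  rw [ENat.card_eq_coe_fintype_card, Fintype.card_fin] at seven_le_six
  exact absurd seven_le_six (by decide)
end
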